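/- Let H be a fixed connected planar graph with e(H) > |H|, and let m:ℕ→ℕ be such that d(n) := n − m(n) > 0 for all n and d(n) = ω(n^{|H|/e(H)}) as n→∞. Then the probability that P_{n,m(n)} contains a subgraph isomorphic to H tends to 0 as n→∞. -/

import Mathlib

/-!
Write `e = e(H)`, `h = |H|` and `d = n - m`. The probability that `P_{n,m}` contains `H` is at most
`2 ^ e * n ^ h / d ^ e = 2 ^ e * (d / n ^ (h / e)) ^ (-e)`, which tends to `0` by the assumption on
`d`. The bound comes from deleting a copy of `H` and then comparing the numbers of planar graphs
with `m - e` and with `m` edges.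

* Deleting a copy of `H` from a graph in `𝒫(n, m)` leaves a graph in `𝒫(n, m - e)`, and the
  original graph is determined by the result and the at most `n ^ h` positions of the copy
  (`card_containing_le`).
* Joining two components of a planar graph by an edge keeps it planar (`IsPlanar.sup_edge`): the
  forbidden minors `K₅` and `K₃,₃` are 2-connected, so in a minor model across a one-edge cut all
  branch sets meet the same side, and their traces on that side are a model avoiding the new edge.
* A graph with `k` edges has, for each vertex, at least `n - k - 1` vertices in other components,
  so double counting gives
  `|𝒫(n, k)| * n * (n - k - 1) ≤ |𝒫(n, k + 1)| * 2 * (k + 1)` (`planarSet_step`). Iterating `e` times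
  up to `m` edges yields `|𝒫(n, m - e)| * (n * d) ^ e ≤ |𝒫(n, m)| * (2 * n) ^ e`
  (`planarSet_iterate`).
-/

open SimpleGraph Filter Asymptotics

/-- `H` is a minor of `G`: to each vertex of `H` we can assign a connected nonempty
branch set in `G`, pairwise disjoint, with an edge of `G` between the branch sets of
any two adjacent vertices of `H`. -/
def IsMinor {α β : Type*} (H : SimpleGraph α) (G : SimpleGraph β) : Prop :=
  ∃ f : α → Set β,
    (∀ a, (G.induce (f a)).Connected) ∧
    (∀ a b, a ≠ b → Disjoint (f a) (f b)) ∧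
    (∀ a b, H.Adj a b → ∃ u ∈ f a, ∃ v ∈ f b, G.Adj u v)

/-- A graph is planar iff it has neither a `K₅`-minor nor a `K₃,₃`-minor
(Wagner's theorem). -/
def IsPlanar {V : Type*} (G : SimpleGraph V) : Prop :=
  ¬ IsMinor (completeGraph (Fin 5)) G ∧
    ¬ IsMinor (completeBipartiteGraph (Fin 3) (Fin 3)) G

/-- The number of edges of a graph. -/
noncomputable def edgeCount {V : Type*} (G : SimpleGraph V) : ℕ :=
  G.edgeSet.ncard

/-- The degree of a vertex. -/
noncomputable def vertexDegree {V : Type*} (G : SimpleGraph V) (v : V) : ℕ :=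
  (G.neighborSet v).ncard

/-- `𝒫(n,m)`: the set of labelled planar graphs on `{1,…,n}` with exactly `m` edges. -/
def planarSet (n m : ℕ) : Set (SimpleGraph (Fin n)) :=
  {G | IsPlanar G ∧ edgeCount G = m}

/-- The probability that the uniform random planar graph `P_{n,m}` satisfies `P`. -/
noncomputable def planarProb (n m : ℕ) (P : SimpleGraph (Fin n) → Prop) : ℝ :=
  ({G ∈ planarSet n m | P G}.ncard : ℝ) / ((planarSet n m).ncard : ℝ)

/-- The number of pendant edges (edges incident to a vertex of degree 1). -/
noncomputable def pendantCount {V : Type*} (G : SimpleGraph V) : ℕ :=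
  {e ∈ G.edgeSet | ∃ v ∈ e, vertexDegree G v = 1}.ncard

/-- The set of addable non-edges of `G`: non-edges whose addition keeps the graph planar. -/
def addableSet {V : Type*} (G : SimpleGraph V) : Set (Sym2 V) :=
  {e | ¬ e.IsDiag ∧ e ∉ G.edgeSet ∧ IsPlanar (G ⊔ SimpleGraph.fromEdgeSet {e})}

/-- `add(n,m)`: the minimum number of addable non-edges over all graphs in `𝒫(n,m)`. -/
noncomputable def addMin (n m : ℕ) : ℕ :=
  sInf ((fun G => (addableSet G).ncard) '' planarSet n m)

/-- `W` carries an induced order-preserving copy of `H` in `G`: the increasing bijection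
from `{1,…,h}` to `W` is an isomorphism between `H` and the induced subgraph `G[W]`. -/
def IsOrderCopy {h n : ℕ} (H : SimpleGraph (Fin h)) (G : SimpleGraph (Fin n))
    (W : Finset (Fin n)) : Prop :=
  ∃ hW : W.card = h,
    ∀ i j : Fin h,
      H.Adj i j ↔ G.Adj ((W.orderIsoOfFin hW i : Fin n)) ((W.orderIsoOfFin hW j : Fin n))

/-- `W` is the vertex set of a connected component of `G`. -/
def IsComponent {V : Type*} (G : SimpleGraph V) (W : Finset V) : Prop :=
  (G.induce (W : Set V)).Connected ∧ ∀ v ∈ W, ∀ u, G.Adj v u → u ∈ W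

/-- The number of components of `G` admitting an order-preserving isomorphism to `H`. -/
noncomputable def numOrderComponents {h n : ℕ} (H : SimpleGraph (Fin h))
    (G : SimpleGraph (Fin n)) : ℕ :=
  {W : Finset (Fin n) | IsComponent G W ∧ IsOrderCopy H G W}.ncard

/-- The number of distinct cycles (as subgraphs, identified with their edge sets) of
length at most `k` in `S`. -/
noncomputable def cycleCountLe {V : Type*} (S : SimpleGraph V) (k : ℕ) : ℕ :=
  {E : Set (Sym2 V) | ∃ (v : V) (c : S.Walk v v),
    c.IsCycle ∧ c.length ≤ k ∧ {e | e ∈ c.edges} = E}.ncard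

/-! ### Minors and bridges -/

theorem IsMinor.mono {α β : Type*} {K : SimpleGraph α} {G G' : SimpleGraph β} (hle : G ≤ G')
    (hm : IsMinor K G) : IsMinor K G' := by
  obtain ⟨f, hc, hdisj, hadj⟩ := hm
  refine ⟨f, fun a => (hc a).mono fun x y hxy => hle hxy, hdisj, fun a b hab => ?_⟩
  obtain ⟨x, hx, y, hy, hxy⟩ := hadj a b hab
  exact ⟨x, hx, y, hy, hle hxy⟩

theorem IsPlanar.anti {β : Type*} {G G' : SimpleGraph β} (hle : G ≤ G')
    (hp : IsPlanar G') : IsPlanar G :=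
  ⟨fun hm => hp.1 (hm.mono hle), fun hm => hp.2 (hm.mono hle)⟩

/-- If the only edge leaving `S` is `uv`, then a connected vertex set meeting both sides of the
cut contains both ends of that edge. -/
theorem ends_mem_of_straddle {β : Type*} {G' : SimpleGraph β} {S A : Set β} {u v : β}
    (hcross : ∀ x y, G'.Adj x y → x ∈ S → y ∉ S → x = u ∧ y = v)
    (hA : (G'.induce A).Connected) {p q : β} (hp : p ∈ A) (hpS : p ∈ S) (hq : q ∈ A)
    (hqS : q ∉ S) : u ∈ A ∧ v ∈ A := by
  obtain ⟨w⟩ := hA.preconnected ⟨p, hp⟩ ⟨q, hq⟩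
  obtain ⟨d, -, h1, h2⟩ := w.exists_boundary_dart (Subtype.val ⁻¹' S) hpS hqS
  obtain ⟨h3, h4⟩ := hcross _ _ d.adj h1 h2
  exact ⟨h3 ▸ d.fst.2, h4 ▸ d.snd.2⟩

/-- If every branch set of a minor model in `G'` meets the side `S` of a one-edge cut, then the
traces of the branch sets on `S` form a model in any graph `G` containing `G'[S]`. -/
theorem isMinor_of_meets_side {α β : Type*} {K : SimpleGraph α} {G G' : SimpleGraph β}
    {S : Set β} {u v : β}
    (hcross : ∀ x y, G'.Adj x y → x ∈ S → y ∉ S → x = u ∧ y = v) (hu : u ∈ S)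
    (hin : ∀ x y, G'.Adj x y → x ∈ S → y ∈ S → G.Adj x y)
    {f : α → Set β} (hc : ∀ a, (G'.induce (f a)).Connected)
    (hdisj : ∀ a b, a ≠ b → Disjoint (f a) (f b))
    (hadj : ∀ a b, K.Adj a b → ∃ x ∈ f a, ∃ y ∈ f b, G'.Adj x y)
    (hmeet : ∀ a, ∃ x ∈ f a, x ∈ S) : IsMinor K G := by
  classical
  have hend : ∀ a x, x ∈ f a → x ∉ S → u ∈ f a := fun a x hx hxS => by
    obtain ⟨p, hp, hpS⟩ := hmeet a
    exact (ends_mem_of_straddle hcross (hc a) hp hpS hx hxS).1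
  refine ⟨fun a => f a ∩ S, fun a => ?_, fun a b hab => ?_, fun a b hab => ?_⟩
  · -- Sending every vertex outside `S` to `u` retracts `f a` onto `f a ∩ S` and preserves
    -- reachability.
    let r : f a → (f a ∩ S : Set β) := fun x =>
      if hx : x.1 ∈ S then ⟨x.1, x.2, hx⟩ else ⟨u, hend a x.1 x.2 hx, hu⟩
    have hr : ∀ x y : f a, (G'.induce (f a)).Walk x y →
        (G.induce (f a ∩ S)).Reachable (r x) (r y) := by
      intro x y w
      induction w with
      | nil => exact Reachable.refl _
      | @cons x y z hxy _ ih =>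
        refine Reachable.trans ?_ ih
        have hxy' : G'.Adj x.1 y.1 := hxy
        by_cases hx : x.1 ∈ S <;> by_cases hy : y.1 ∈ S
        · refine Adj.reachable ?_
          simp only [r, hx, hy, dif_pos]
          exact hin _ _ hxy' hx hy
        · have := (hcross _ _ hxy' hx hy).1
          simp only [r, hy, hu, dif_pos, dif_neg, not_false_eq_true, this]
          exact Reachable.refl _
        · have := (hcross _ _ hxy'.symm hy hx).1
          simp only [r, hx, hu, dif_pos, dif_neg, not_false_eq_true, this]
          exact Reachable.refl _
        · simp only [r, hx, hy, dif_neg, not_false_eq_true]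
          exact Reachable.refl _
    obtain ⟨p, hp, hpS⟩ := hmeet a
    have : Nonempty (f a ∩ S : Set β) := ⟨⟨p, hp, hpS⟩⟩
    refine ⟨fun x y => ?_⟩
    obtain ⟨w⟩ := (hc a).preconnected ⟨x.1, x.2.1⟩ ⟨y.1, y.2.1⟩
    simpa [r, x.2.2, y.2.2] using hr _ _ w
  · exact (hdisj a b hab).mono Set.inter_subset_left Set.inter_subset_left
  · obtain ⟨x, hx, y, hy, hxy⟩ := hadj a b hab
    have hd := Set.disjoint_left.1 (hdisj a b hab.ne)
    by_cases hxS : x ∈ S <;> by_cases hyS : y ∈ S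
    · exact ⟨x, ⟨hx, hxS⟩, y, ⟨hy, hyS⟩, hin _ _ hxy hxS hyS⟩
    · exact absurd (hend b y hy hyS) (hd ((hcross _ _ hxy hxS hyS).1 ▸ hx))
    · exact absurd ((hcross _ _ hxy.symm hyS hxS).1 ▸ hy) (hd (hend a x hx hxS))
    · exact absurd (hend b y hy hyS) (hd (hend a x hx hxS))

/-- A form of 2-connectivity: a nonempty set of vertices all of whose outgoing edges end in the
same vertex misses at most one vertex; moreover there are at least three vertices. -/
structure TwoConn {α : Type*} (K : SimpleGraph α) : Prop where
  cut : ∀ T : Set α, T.Nonempty →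
    (∀ x ∈ T, ∀ x' ∈ T, ∀ y ∉ T, ∀ y' ∉ T, K.Adj x y → K.Adj x' y' → y = y') →
    ∀ y ∉ T, ∀ y' ∉ T, y = y'
  third : ∀ a b : α, ∃ c, c ≠ a ∧ c ≠ b

theorem twoConn_completeGraph_five : TwoConn (completeGraph (Fin 5)) where
  cut := by
    rintro T ⟨x, hx⟩ h y hy y' hy'
    refine h x hx x hx y hy y' hy' ?_ ?_ <;> simp only [completeGraph, top_adj] <;>
      (rintro rfl; contradiction)
  third := by decide

theorem twoConn_completeBipartiteGraph_three :
    TwoConn (completeBipartiteGraph (Fin 3) (Fin 3)) where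
  cut := by
    rintro T ⟨x, hx⟩ h y hy y' hy'
    have hl : ∀ i j, (completeBipartiteGraph (Fin 3) (Fin 3)).Adj (.inl i) (.inr j) := by simp
    have hr : ∀ i j, (completeBipartiteGraph (Fin 3) (Fin 3)).Adj (.inr i) (.inl j) := by simp
    have h01 : (0 : Fin 3) ≠ 1 := by decide
    -- Two vertices on the same side, one in `T` and one not, force the other side into `T`.
    have key1 : ∀ i j, Sum.inl i ∈ T → Sum.inl j ∉ T → ∀ k, Sum.inr k ∈ T := by
      intro i j hi hj k
      by_contra hk
      have : ∀ l, Sum.inr l ∉ T := fun l hl' => by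
        cases h _ hl' _ hi _ hj _ hk (hr l j) (hl i k)
      exact h01 (Sum.inr_injective (h _ hi _ hi _ (this 0) _ (this 1) (hl i 0) (hl i 1)))
    have key2 : ∀ i j, Sum.inr i ∈ T → Sum.inr j ∉ T → ∀ k, Sum.inl k ∈ T := by
      intro i j hi hj k
      by_contra hk
      have : ∀ l, Sum.inl l ∉ T := fun l hl' => by
        cases h _ hl' _ hi _ hj _ hk (hl l j) (hr i k)
      exact h01 (Sum.inl_injective (h _ hi _ hi _ (this 0) _ (this 1) (hr i 0) (hr i 1)))
    have hout : ∀ z ∉ T, ∃ t ∈ T, (completeBipartiteGraph (Fin 3) (Fin 3)).Adj t z := by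
      intro z hz
      rcases x with i | i <;> rcases z with j | j
      · exact ⟨_, key1 i j hx hz 0, hr 0 j⟩
      · exact ⟨_, hx, hl i j⟩
      · exact ⟨_, hx, hr i j⟩
      · exact ⟨_, key2 i j hx hz 0, hl 0 j⟩
    obtain ⟨t, ht, hty⟩ := hout y hy
    obtain ⟨t', ht', hty'⟩ := hout y' hy'
    exact h t ht t' ht' y hy y' hy' hty hty'
  third := by decide

/-- Joining two components by an edge creates no 2-connected minor. -/
theorem isMinor_of_isMinor_sup_edge {α β : Type*} {K : SimpleGraph α} (hK : TwoConn K)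
    {G : SimpleGraph β} {u v : β} (huv : ¬ G.Reachable u v) (hm : IsMinor K (G ⊔ edge u v)) :
    IsMinor K G := by
  obtain ⟨f, hc, hdisj, hadj⟩ := hm
  set G' := G ⊔ edge u v with hG'
  set C : Set β := {x | G.Reachable u x} with hC
  have hu : u ∈ C := Reachable.refl u
  have hv : v ∈ Cᶜ := huv
  have hadj' : ∀ x y, G'.Adj x y → G.Adj x y ∨ (x = u ∧ y = v) ∨ (x = v ∧ y = u) := by
    intro x y hxy
    rw [hG', sup_adj, edge_adj] at hxy
    tauto
  have hcross : ∀ x y, G'.Adj x y → x ∈ C → y ∉ C → x = u ∧ y = v := by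
    intro x y hxy hx hy
    rcases hadj' x y hxy with h | h | h
    · exact absurd (hx.trans h.reachable) hy
    · exact h
    · exact absurd (h.1 ▸ hx) hv
  have hcross' : ∀ x y, G'.Adj x y → x ∈ Cᶜ → y ∉ Cᶜ → x = v ∧ y = u := by
    intro x y hxy hx hy
    exact (hcross y x hxy.symm (not_not.1 hy) hx).symm
  have hin : ∀ x y, G'.Adj x y → x ∈ C → y ∈ C → G.Adj x y := by
    intro x y hxy hx hy
    rcases hadj' x y hxy with h | h | h
    · exact h
    · exact absurd (h.2 ▸ hy) hv
    · exact absurd (h.1 ▸ hx) hv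
  have hin' : ∀ x y, G'.Adj x y → x ∈ Cᶜ → y ∈ Cᶜ → G.Adj x y := by
    intro x y hxy hx hy
    rcases hadj' x y hxy with h | h | h
    · exact h
    · exact absurd hu (h.1 ▸ hx)
    · exact absurd hu (h.2 ▸ hy)
  by_cases h1 : ∀ a, ∃ x ∈ f a, x ∈ C
  · exact isMinor_of_meets_side hcross hu hin hc hdisj hadj h1
  by_cases h2 : ∀ a, ∃ x ∈ f a, x ∈ Cᶜ
  · exact isMinor_of_meets_side hcross' hv hin' hc hdisj hadj h2
  exfalso
  push Not at h1 h2
  obtain ⟨a, ha⟩ := h1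
  obtain ⟨b, hb⟩ := h2
  -- All edges of `K` leaving the set of branch sets contained in `S` end in the one branch set
  -- containing the far end of the cut edge.
  have side : ∀ (S : Set β) (u v : β),
      (∀ x y, G'.Adj x y → x ∈ S → y ∉ S → x = u ∧ y = v) →
      ∀ t, f t ⊆ S → ∀ y, ¬ f y ⊆ S → ∀ y', ¬ f y' ⊆ S → y = y' := by
    intro S u v hcr t ht
    refine hK.cut {x | f x ⊆ S} ⟨t, ht⟩ ?_
    have hmem : ∀ x, f x ⊆ S → ∀ y, ¬ f y ⊆ S → K.Adj x y → v ∈ f y := by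
      intro x hx y hy hxy
      obtain ⟨p, hp, q, hq, hpq⟩ := hadj x y hxy
      by_cases hqS : q ∈ S
      · obtain ⟨z, hz, hzS⟩ := Set.not_subset.1 hy
        exact (ends_mem_of_straddle hcr (hc y) hq hqS hz hzS).2
      · exact (hcr p q hpq (hx hp) hqS).2 ▸ hq
    intro x hx x' hx' y hy y' hy' hxy hxy'
    by_contra hne
    exact Set.disjoint_left.1 (hdisj y y' hne) (hmem x hx y hy hxy) (hmem x' hx' y' hy' hxy')
  have hne : ∀ x, ∃ p, p ∈ f x := fun x => by
    obtain ⟨p⟩ := (hc x).nonempty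
    exact ⟨p.1, p.2⟩
  have haC : f a ⊆ Cᶜ := fun x hx => ha x hx
  have hbC : f b ⊆ C := fun x hx => by simpa using hb x hx
  have hsep : ∀ x, f x ⊆ C → ¬ f x ⊆ Cᶜ := fun x h h' => by
    obtain ⟨p, hp⟩ := hne x
    exact h' hp (h hp)
  obtain ⟨c, hca, hcb⟩ := hK.third a b
  have hc1 : f c ⊆ C := by
    by_contra h
    exact hca (side C u v hcross b hbC c h a fun h' => hsep a h' haC)
  have hc2 : f c ⊆ Cᶜ := by
    by_contra h
    exact hcb (side Cᶜ v u hcross' a haC c h b (hsep b hbC))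
  exact hsep c hc1 hc2

theorem IsPlanar.sup_edge {β : Type*} {G : SimpleGraph β} (hp : IsPlanar G) {u v : β}
    (huv : ¬ G.Reachable u v) : IsPlanar (G ⊔ edge u v) :=
  ⟨fun hm => hp.1 (isMinor_of_isMinor_sup_edge twoConn_completeGraph_five huv hm),
    fun hm => hp.2 (isMinor_of_isMinor_sup_edge twoConn_completeBipartiteGraph_three huv hm)⟩

/-! ### Counting planar graphs -/

/-- From any vertex, at least `n - e(G) - 1` vertices are unreachable: the component of `x` is
connected, so it has at most `e(G) + 1` vertices. -/
theorem card_not_reachable {n : ℕ} (G : SimpleGraph (Fin n)) (x : Fin n) :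
    n ≤ {y | ¬ G.Reachable x y}.ncard + edgeCount G + 1 := by
  classical
  set C := G.connectedComponentMk x with hC
  have h1 := C.connected_toSimpleGraph.card_vert_le_card_edgeSet_add_one
  have h2 : Nat.card C.toSimpleGraph.edgeSet ≤ Nat.card G.edgeSet :=
    Nat.card_le_card_of_injective _ (Embedding.induce (G := G) C.supp).mapEdgeSet.injective
  have h3 : {y | ¬ G.Reachable x y} = C.suppᶜ := by
    ext y
    simp [hC, ConnectedComponent.mem_supp_iff, reachable_comm]
  have h4 := Set.ncard_add_ncard_compl C.supp
  rw [Nat.card_fin] at h4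
  have h5 : Nat.card C = C.supp.ncard := rfl
  have h6 : Nat.card G.edgeSet = edgeCount G := rfl
  rw [h3]
  omega

theorem edgeCount_sup_edge {n : ℕ} {G : SimpleGraph (Fin n)} {x y : Fin n} (hne : x ≠ y)
    (hxy : ¬ G.Adj x y) : edgeCount (G ⊔ edge x y) = edgeCount G + 1 := by
  have : (G ⊔ edge x y).edgeSet = insert s(x, y) G.edgeSet := by
    ext e
    induction e with | _ a b
    simp only [mem_edgeSet, sup_adj, edge_adj, Set.mem_insert_iff, Sym2.eq_iff]
    constructor
    · tauto
    · rintro ((h | h) | h)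
      · exact Or.inr ⟨Or.inl h, by rw [h.1, h.2]; exact hne⟩
      · exact Or.inr ⟨Or.inr h, by rw [h.1, h.2]; exact hne.symm⟩
      · exact Or.inl h
  rw [edgeCount, this, Set.ncard_insert_of_notMem (by simpa using hxy)]
  rfl

/-- Double counting of the pairs (planar graph with `k` edges, ordered pair of vertices in
different components): joining the two vertices gives a planar graph with `k + 1` edges together
with an oriented edge, from which the original pair is recovered. -/
theorem planarSet_step (n k : ℕ) :
    (planarSet n k).ncard * (n * (n - (k + 1))) ≤
      (planarSet n (k + 1)).ncard * (2 * (k + 1)) := by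
  classical
  rw [Set.ncard_eq_toFinset_card', Set.ncard_eq_toFinset_card']
  let A : Finset (Σ _ : SimpleGraph (Fin n), Fin n × Fin n) :=
    (planarSet n k).toFinset.sigma fun G => Finset.univ.filter fun p => ¬ G.Reachable p.1 p.2
  let B : Finset (Σ _ : SimpleGraph (Fin n), Fin n × Fin n) :=
    (planarSet n (k + 1)).toFinset.sigma fun G => Finset.univ.filter fun p => G.Adj p.1 p.2
  have hA : (planarSet n k).toFinset.card * (n * (n - (k + 1))) ≤ A.card := by
    rw [Finset.card_sigma, ← smul_eq_mul]
    refine Finset.card_nsmul_le_sum _ _ _ fun G hG => ?_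
    have hk : edgeCount G = k := (Set.mem_toFinset.1 hG).2
    have : (Finset.univ.filter fun p : Fin n × Fin n => ¬ G.Reachable p.1 p.2) =
        (Finset.univ.sigma fun x => Finset.univ.filter fun y => ¬ G.Reachable x y).map
          (Equiv.sigmaEquivProd (Fin n) (Fin n)).toEmbedding := by
      ext ⟨x, y⟩
      simp
    rw [this, Finset.card_map, Finset.card_sigma]
    have h := Finset.card_nsmul_le_sum (Finset.univ : Finset (Fin n))
      (fun x => (Finset.univ.filter fun y => ¬ G.Reachable x y).card) (n - (k + 1))
      (fun x _ => by
        have := card_not_reachable G x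
        rw [Set.ncard_eq_toFinset_card', Set.toFinset_ofPred] at this
        omega)
    simpa using h
  have hB : B.card = (planarSet n (k + 1)).toFinset.card * (2 * (k + 1)) := by
    rw [Finset.card_sigma]
    refine Finset.sum_const_nat fun G hG => ?_
    have hk : edgeCount G = k + 1 := (Set.mem_toFinset.1 hG).2
    refine (two_mul_card_edgeFinset G).symm.trans ?_
    rw [← hk, edgeCount, Set.ncard_eq_toFinset_card']
    rfl
  refine hA.trans (le_trans ?_ hB.le)
  refine Finset.card_le_card_of_injOn (fun q => ⟨q.1 ⊔ edge q.2.1 q.2.2, q.2⟩) ?_ ?_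
  · rintro ⟨G, x, y⟩ hq
    simp only [A, B, Finset.coe_sigma, Set.mem_sigma_iff, Finset.mem_coe, Set.mem_toFinset,
      Finset.mem_filter, Finset.mem_univ, true_and] at hq ⊢
    obtain ⟨⟨hpl, hk⟩, hxy⟩ := hq
    have hne : x ≠ y := by rintro rfl; exact hxy (Reachable.refl _)
    refine ⟨⟨hpl.sup_edge hxy, ?_⟩, Or.inr (by simp [edge_adj, hne])⟩
    rw [edgeCount_sup_edge hne fun h => hxy h.reachable, hk]
  · rintro ⟨G, x, y⟩ hq ⟨G', x', y'⟩ hq' heq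
    simp only [A, Finset.coe_sigma, Set.mem_sigma_iff, Finset.mem_coe, Set.mem_toFinset,
      Finset.mem_filter, Finset.mem_univ, true_and] at hq hq'
    simp only [Sigma.mk.injEq, heq_eq_eq, Prod.mk.injEq] at heq
    obtain ⟨hG, rfl, rfl⟩ := heq
    have hdel : ∀ F : SimpleGraph (Fin n), ¬ F.Reachable x y →
        F = (F ⊔ edge x y) \ edge x y := by
      intro F hF
      rw [sup_sdiff_right_self, eq_comm, sdiff_eq_left, disjoint_left]
      intro a b hab he
      rw [edge_adj] at he
      rcases he.1 with ⟨rfl, rfl⟩ | ⟨rfl, rfl⟩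
      · exact hF hab.reachable
      · exact hF hab.symm.reachable
    have : G = G' := by rw [hdel G hq.2, hdel G' hq'.2, hG]
    rw [this]

/-- Each of the `j` steps from `m - j` up to `m` edges gains a factor of at least
`(n - m) / 2`. -/
theorem planarSet_iterate {n m : ℕ} (hm : m < n) (j : ℕ) (hj : j ≤ m) :
    (planarSet n (m - j)).ncard * (n * (n - m)) ^ j ≤ (planarSet n m).ncard * (2 * n) ^ j := by
  induction j with
  | zero => simp
  | succ j ih =>
    have ih := ih (by omega)
    have hstep := planarSet_step n (m - (j + 1))
    have he : m - (j + 1) + 1 = m - j := by omega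
    rw [he] at hstep
    calc (planarSet n (m - (j + 1))).ncard * (n * (n - m)) ^ (j + 1)
        = (planarSet n (m - (j + 1))).ncard * (n * (n - m)) * (n * (n - m)) ^ j := by ring
      _ ≤ (planarSet n (m - (j + 1))).ncard * (n * (n - (m - j))) * (n * (n - m)) ^ j := by
          gcongr
          omega
      _ ≤ (planarSet n (m - j)).ncard * (2 * (m - j)) * (n * (n - m)) ^ j := by gcongr
      _ ≤ (planarSet n (m - j)).ncard * (2 * n) * (n * (n - m)) ^ j := by
          gcongr
          omega
      _ = (planarSet n (m - j)).ncard * (n * (n - m)) ^ j * (2 * n) := by ring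
      _ ≤ (planarSet n m).ncard * (2 * n) ^ j * (2 * n) := by gcongr
      _ = _ := by ring

/-! ### Graphs containing a fixed subgraph -/

/-- At most `|𝒫(n, m - e(H))| * n ^ h` graphs in `𝒫(n, m)` contain `H`. Delete a chosen copy of
`H`: the remaining graph and the position of the copy determine the original graph. -/
theorem card_containing_le {h n m : ℕ} (H : SimpleGraph (Fin h)) :
    {G ∈ planarSet n m | ∃ f : Fin h → Fin n, Function.Injective f ∧
      ∀ i j, H.Adj i j → G.Adj (f i) (f j)}.ncard ≤
      (planarSet n (m - edgeCount H)).ncard * n ^ h := by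
  classical
  set bad := {G ∈ planarSet n m | ∃ f : Fin h → Fin n, Function.Injective f ∧
      ∀ i j, H.Adj i j → G.Adj (f i) (f j)} with hbad
  rcases bad.eq_empty_or_nonempty with hempty | ⟨G₀, hG₀⟩
  · simp [hempty]
  have : Nonempty (Fin h → Fin n) := ⟨hG₀.2.choose⟩
  have hex : ∀ G ∈ bad, ∃ f : Fin h → Fin n, Function.Injective f ∧
      ∀ i j, H.Adj i j → G.Adj (f i) (f j) := fun G hG => hG.2
  choose! φ hφ using hex
  have hle : ∀ G ∈ bad, H.map (φ G) ≤ G := by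
    rintro G hG _ _ ⟨-, a, b, hab, rfl, rfl⟩
    exact (hφ G hG).2 a b hab
  have hcard : (planarSet n (m - edgeCount H) ×ˢ (Set.univ : Set (Fin h → Fin n))).ncard =
      (planarSet n (m - edgeCount H)).ncard * n ^ h := by
    rw [Set.ncard_prod, Set.ncard_univ, Nat.card_fun, Nat.card_fin, Nat.card_fin]
  rw [← hcard]
  refine Set.ncard_le_ncard_of_injOn (fun G => (G \ H.map (φ G), φ G)) ?_ ?_ (Set.toFinite _)
  · intro G hG
    refine ⟨⟨hG.1.1.anti sdiff_le, ?_⟩, Set.mem_univ _⟩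
    have hmap : (H.map (φ G)).edgeSet.ncard = edgeCount H := by
      have := edgeSet_map ⟨φ G, (hφ G hG).1⟩ H
      simp only [Function.Embedding.coeFn_mk] at this
      rw [this, Set.ncard_image_of_injective _ (Function.Embedding.injective _)]
      rfl
    have hm : edgeCount G = m := hG.1.2
    show (G \ H.map (φ G)).edgeSet.ncard = _
    rw [edgeSet_sdiff, Set.ncard_sdiff (edgeSet_mono (hle G hG)), hmap, ← hm]
    rfl
  · intro G hG G' hG' heq
    simp only [Prod.mk.injEq] at heq
    rw [← sdiff_sup_cancel (hle G hG), ← sdiff_sup_cancel (hle G' hG'), heq.1, heq.2]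

theorem card_containing_eq_zero {h n m : ℕ} (H : SimpleGraph (Fin h)) (hm : m < edgeCount H) :
    {G ∈ planarSet n m | ∃ f : Fin h → Fin n, Function.Injective f ∧
      ∀ i j, H.Adj i j → G.Adj (f i) (f j)}.ncard = 0 := by
  rw [Set.ncard_eq_zero (Set.toFinite _), Set.eq_empty_iff_forall_notMem]
  rintro G ⟨⟨-, hG⟩, f, hf, hadj⟩
  have h1 := edgeSet_map ⟨f, hf⟩ H
  have h2 : H.map (⟨f, hf⟩ : Fin h ↪ Fin n) ≤ G := by
    rintro _ _ ⟨-, a, b, hab, rfl, rfl⟩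
    exact hadj a b hab
  have h3 := Set.ncard_le_ncard (edgeSet_mono h2) (Set.toFinite _)
  rw [h1, Set.ncard_image_of_injective _ (Function.Embedding.injective _)] at h3
  have h4 : edgeCount G = G.edgeSet.ncard := rfl
  have h5 : edgeCount H = H.edgeSet.ncard := rfl
  omega

theorem planarProb_containing_le {h n m : ℕ} (H : SimpleGraph (Fin h)) (hm : m < n) :
    planarProb n m (fun G => ∃ f : Fin h → Fin n, Function.Injective f ∧
      ∀ i j, H.Adj i j → G.Adj (f i) (f j)) ≤
      2 ^ edgeCount H * (n : ℝ) ^ h / ((n : ℝ) - m) ^ edgeCount H := by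
  have hd : (0 : ℝ) < (n : ℝ) - m := by
    rw [sub_pos]
    exact_mod_cast hm
  have hn : (0 : ℝ) < n := by exact_mod_cast (Nat.zero_le m).trans_lt hm
  have hrhs : 0 ≤ 2 ^ edgeCount H * (n : ℝ) ^ h / ((n : ℝ) - m) ^ edgeCount H := by positivity
  unfold planarProb
  rcases lt_or_ge m (edgeCount H) with hlt | hge
  · rw [card_containing_eq_zero H hlt]
    simpa using hrhs
  refine div_le_of_le_mul₀ (Nat.cast_nonneg _) hrhs ?_
  have h1 := card_containing_le (n := n) (m := m) H
  have h2 := planarSet_iterate hm _ hge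
  have h1' : (({G ∈ planarSet n m | ∃ f : Fin h → Fin n, Function.Injective f ∧
      ∀ i j, H.Adj i j → G.Adj (f i) (f j)}.ncard : ℕ) : ℝ) ≤
      ((planarSet n (m - edgeCount H)).ncard : ℝ) * (n : ℝ) ^ h := by exact_mod_cast h1
  have h2' : ((planarSet n (m - edgeCount H)).ncard : ℝ) *
      ((n : ℝ) * ((n : ℝ) - m)) ^ edgeCount H ≤
      ((planarSet n m).ncard : ℝ) * (2 * (n : ℝ)) ^ edgeCount H := by
    rw [← Nat.cast_sub hm.le]
    exact_mod_cast h2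
  refine h1'.trans ?_
  rw [div_mul_eq_mul_div, le_div_iff₀ (by positivity)]
  have hne : (0 : ℝ) < (n : ℝ) ^ edgeCount H := by positivity
  refine le_of_mul_le_mul_right ?_ hne
  rw [mul_pow, mul_pow] at h2'
  calc _ = ((planarSet n (m - edgeCount H)).ncard : ℝ) *
        ((n : ℝ) ^ edgeCount H * ((n : ℝ) - m) ^ edgeCount H) * (n : ℝ) ^ h := by ring
    _ ≤ ((planarSet n m).ncard : ℝ) * (2 ^ edgeCount H * (n : ℝ) ^ edgeCount H) * (n : ℝ) ^ h := by
        gcongr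
    _ = _ := by ring

/-! ### The limit -/

theorem multicyclic_subgraph_whp_zero (h : ℕ) (H : SimpleGraph (Fin h))
    (hconn : H.Connected) (hplanar : IsPlanar H) (hmulti : h < edgeCount H) (m : ℕ → ℕ)
    (hpos : ∀ n : ℕ, 0 < n → m n < n)
    (hd : Tendsto
      (fun n : ℕ => ((n : ℝ) - (m n : ℝ)) / (n : ℝ) ^ ((h : ℝ) / (edgeCount H : ℝ)))
      atTop atTop) :
    Tendsto (fun n : ℕ =>
        planarProb n (m n) fun G =>
          ∃ f : Fin h → Fin n, Function.Injective f ∧ ∀ i j, H.Adj i j → G.Adj (f i) (f j))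
      atTop (nhds 0) := by
  set e := edgeCount H with he
  have he0 : e ≠ 0 := by omega
  have hlim : Tendsto (fun n : ℕ => (2 : ℝ) ^ e *
      ((((n : ℝ) - (m n : ℝ)) / (n : ℝ) ^ ((h : ℝ) / (e : ℝ))) ^ e)⁻¹) atTop (nhds 0) := by
    have h1 := ((tendsto_pow_atTop he0).comp hd).inv_tendsto_atTop.const_mul ((2 : ℝ) ^ e)
    rw [mul_zero] at h1
    exact h1
  refine squeeze_zero' (Eventually.of_forall fun n => ?_) ?_ hlim
  · unfold planarProb
    positivity
  · filter_upwards [eventually_gt_atTop 0] with n hn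
    refine (planarProb_containing_le H (hpos n hn)).trans (le_of_eq ?_)
    have hpow : ((n : ℝ) ^ ((h : ℝ) / (e : ℝ))) ^ e = (n : ℝ) ^ h := by
      rw [← Real.rpow_natCast, ← Real.rpow_mul (Nat.cast_nonneg n),
        div_mul_cancel₀ _ (by exact_mod_cast he0), Real.rpow_natCast]
    rw [div_pow, hpow, inv_div, mul_div_assoc]
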